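/- Let A_1, …, A_n be subsets of ℝ⁺ and suppose there is a number p ∈ [0,1] such that p̄(A_1) = … = p̄(A_n) = p. Then the family {A_1, …, A_n} is coherently porous if and only if p̄(A_1 ∪ … ∪ A_n) = p. -/

import Mathlib

/-!
Write `E = ⋃ i, A i` and `φ_B h = gapLength B h / h`. Since `gapLength` is antitone in the set,
`φ_E ≤ φ_{A i}` and hence `upperPorosity E ≤ p`.

If `upperPorosity E = p`, choose `h_k → 0⁺` with `φ_E (h_k) > p - 1/(k+1)`. Then
`p - 1/(k+1) < φ_{A i} (h_k)`, while the limsup of `φ_{A i}` is `p`, so `h` lies in every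
`UMP (A i)`.

Conversely, let `h` lie in every `UMP (A i)`; only `p > 0` needs an argument. The maximal gaps of
the different sets `A i` in `(0, h_k)` could a priori be far apart. However, a gap `(a, b)` of
`A i` with `b - a > (p - δ) h_k` also lies in `(0, b)`, so `(p - δ) h_k < (p + δ) b`, that is,
`b` is nearly `h_k`, and therefore `a` is at most about `(1 - p) h_k`. All these gaps thus contain
the same interval of length nearly `p h_k` (`Ioo_inter_eq_empty_of_gapLength`), which is then a
gap of `E`.
-/


open Filter Set

/-- `gapLength E h` = λ(E,h): the length of the largest open subinterval of (0,h)
containing no point of `E` (0 if no such interval exists). -/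
noncomputable def gapLength (E : Set ℝ) (h : ℝ) : ℝ :=
  sSup {l : ℝ | ∃ a b : ℝ, 0 ≤ a ∧ a ≤ b ∧ b ≤ h ∧ Set.Ioo a b ∩ E = ∅ ∧ l = b - a}

/-- The right upper porosity of `E` at 0. -/
noncomputable def upperPorosity (E : Set ℝ) : ℝ :=
  Filter.limsup (fun h => gapLength E h / h) (nhdsWithin (0:ℝ) (Set.Ioi 0))

/-- The right lower porosity of `E` at 0. -/
noncomputable def lowerPorosity (E : Set ℝ) : ℝ :=
  Filter.liminf (fun h => gapLength E h / h) (nhdsWithin (0:ℝ) (Set.Ioi 0))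

/-- `UMP E`: sequences of positive reals tending to 0 along which the upper limit
in the definition of porosity is attained. -/
def UMP (E : Set ℝ) : Set (ℕ → ℝ) :=
  {h | (∀ n, 0 < h n) ∧ Filter.Tendsto h Filter.atTop (nhds 0) ∧
    Filter.Tendsto (fun n => gapLength E (h n) / h n) Filter.atTop (nhds (upperPorosity E))}

/-- The set of all strongly porous at 0 subsets of ℝ⁺. -/
def SP : Set (Set ℝ) := {E | E ⊆ Set.Ici 0 ∧ upperPorosity E = 1}

/-- `I` is an ideal on the set `X`. -/
def IsIdealOn (X : Set ℝ) (I : Set (Set ℝ)) : Prop :=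
  I.Nonempty ∧ (∀ B ∈ I, B ⊆ X) ∧ (∀ B ∈ I, ∀ C : Set ℝ, C ⊆ B → C ∈ I) ∧
    (∀ B ∈ I, ∀ C ∈ I, B ∪ C ∈ I) ∧ X ∉ I

/-- `I` is a `Γ`-maximal ideal on `X`. -/
def IsMaximalIdealIn (X : Set ℝ) (Γ I : Set (Set ℝ)) : Prop :=
  IsIdealOn X I ∧ I ⊆ Γ ∧ ∀ J : Set (Set ℝ), IsIdealOn X J → I ⊆ J → J ⊆ Γ → I = J

/-- `Î(SP)`: the intersection of all SP-maximal ideals on ℝ⁺. -/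
def hatISP : Set (Set ℝ) :=
  {A | ∀ I : Set (Set ℝ), IsMaximalIdealIn (Set.Ici 0) SP I → A ∈ I}

/-- The q-blow up `E(q)` of a set `E ⊆ ℝ⁺`. -/
def blowUp (E : Set ℝ) (q : ℝ) : Set ℝ := ⋃ x ∈ E, Set.Ioo (q⁻¹ * x) (q * x)

lemma bddAbove_gaps (E : Set ℝ) (h : ℝ) :
    BddAbove {l : ℝ | ∃ a b : ℝ, 0 ≤ a ∧ a ≤ b ∧ b ≤ h ∧ Set.Ioo a b ∩ E = ∅ ∧ l = b - a} := by
  refine ⟨h, ?_⟩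
  rintro l ⟨a, b, ha, _, hb, _, rfl⟩
  linarith

lemma zero_mem_gaps (E : Set ℝ) {h : ℝ} (hh : 0 ≤ h) :
    (0 : ℝ) ∈ {l : ℝ | ∃ a b : ℝ, 0 ≤ a ∧ a ≤ b ∧ b ≤ h ∧ Set.Ioo a b ∩ E = ∅ ∧ l = b - a} :=
  ⟨0, 0, le_rfl, le_rfl, hh, by simp, by simp⟩

lemma gapLength_nonneg (E : Set ℝ) {h : ℝ} (hh : 0 ≤ h) : 0 ≤ gapLength E h :=
  le_csSup (bddAbove_gaps E h) (zero_mem_gaps E hh)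

lemma gapLength_le (E : Set ℝ) {h : ℝ} (hh : 0 ≤ h) : gapLength E h ≤ h := by
  refine csSup_le ⟨0, zero_mem_gaps E hh⟩ ?_
  rintro l ⟨a, b, ha, _, hb, _, rfl⟩
  linarith

/-- The condition `a ≤ b` is not needed: if it fails, the left-hand side is negative. -/
lemma sub_le_gapLength {E : Set ℝ} {a b h : ℝ} (hh : 0 ≤ h) (ha : 0 ≤ a) (hb : b ≤ h)
    (hE : Set.Ioo a b ∩ E = ∅) : b - a ≤ gapLength E h := by
  rcases le_total a b with hab | hab
  · exact le_csSup (bddAbove_gaps E h) ⟨a, b, ha, hab, hb, hE, rfl⟩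
  · linarith [gapLength_nonneg E hh]

lemma gapLength_anti {B E : Set ℝ} (hBE : B ⊆ E) {h : ℝ} (hh : 0 ≤ h) :
    gapLength E h ≤ gapLength B h := by
  refine csSup_le ⟨0, zero_mem_gaps E hh⟩ ?_
  rintro l ⟨a, b, ha, _, hb, hE, rfl⟩
  exact sub_le_gapLength hh ha hb
    (Set.subset_empty_iff.1 (hE ▸ Set.inter_subset_inter_right _ hBE))

lemma eventually_gapLength_div_nonneg (E : Set ℝ) :
    ∀ᶠ h in nhdsWithin (0:ℝ) (Set.Ioi 0), 0 ≤ gapLength E h / h := by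
  filter_upwards [self_mem_nhdsWithin] with h hh
  exact div_nonneg (gapLength_nonneg E (le_of_lt hh)) (le_of_lt hh)

lemma eventually_gapLength_div_le_one (E : Set ℝ) :
    ∀ᶠ h in nhdsWithin (0:ℝ) (Set.Ioi 0), gapLength E h / h ≤ 1 := by
  filter_upwards [self_mem_nhdsWithin] with h hh
  exact div_le_one_of_le₀ (gapLength_le E (le_of_lt hh)) (le_of_lt hh)

lemma isBoundedUnder_le_gapLength_div (E : Set ℝ) :
    (nhdsWithin (0:ℝ) (Set.Ioi 0)).IsBoundedUnder (· ≤ ·) (fun h => gapLength E h / h) :=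
  Filter.isBoundedUnder_of_eventually_le (eventually_gapLength_div_le_one E)

lemma isCoboundedUnder_le_gapLength_div (E : Set ℝ) :
    (nhdsWithin (0:ℝ) (Set.Ioi 0)).IsCoboundedUnder (· ≤ ·) (fun h => gapLength E h / h) :=
  (Filter.isBoundedUnder_of_eventually_ge
    (eventually_gapLength_div_nonneg E)).isCoboundedUnder_le

lemma upperPorosity_nonneg (E : Set ℝ) : 0 ≤ upperPorosity E :=
  Filter.le_limsup_of_frequently_le (eventually_gapLength_div_nonneg E).frequently
    (isBoundedUnder_le_gapLength_div E)

lemma upperPorosity_anti {B E : Set ℝ} (hBE : B ⊆ E) : upperPorosity E ≤ upperPorosity B := by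
  refine Filter.limsup_le_limsup ?_ (isCoboundedUnder_le_gapLength_div E)
    (isBoundedUnder_le_gapLength_div B)
  filter_upwards [self_mem_nhdsWithin] with h hh
  exact div_le_div_of_nonneg_right (gapLength_anti hBE (le_of_lt hh)) (le_of_lt hh)

lemma eventually_gapLength_div_lt {E : Set ℝ} {q : ℝ} (hq : upperPorosity E < q) :
    ∀ᶠ h in nhdsWithin (0:ℝ) (Set.Ioi 0), gapLength E h / h < q :=
  Filter.eventually_lt_of_limsup_lt hq (isBoundedUnder_le_gapLength_div E)

/-- If `gapLength B x < (p + δ) x` at every scale `x ≤ h`, then a gap in `(0, h)` longer than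
`(p - δ) h` contains an interval that does not depend on `B`. -/
lemma Ioo_inter_eq_empty_of_gapLength {B : Set ℝ} {p δ h : ℝ} (hδ : 0 < δ) (hδp : δ < p)
    (hh : 0 < h) (hlow : (p - δ) * h < gapLength B h)
    (hup : ∀ x, 0 < x → x ≤ h → gapLength B x < (p + δ) * x) :
    Set.Ioo ((1 - (p - δ)) * h) ((p - δ) / (p + δ) * h) ∩ B = ∅ := by
  obtain ⟨l, ⟨a, b, ha, hab, hb, hB, rfl⟩, hl⟩ :=
    exists_lt_of_lt_csSup ⟨0, zero_mem_gaps B hh.le⟩ hlow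
  have hpos : 0 < (p - δ) * h := mul_pos (by linarith) hh
  have hb0 : 0 < b := by linarith
  have h1 : b - a < (p + δ) * b :=
    (sub_le_gapLength hb0.le ha le_rfl hB).trans_lt (hup b hb0 hb)
  have h2 : (p - δ) / (p + δ) * h ≤ b := by
    rw [div_mul_eq_mul_div, div_le_iff₀ (by linarith)]
    linarith
  have h3 : a ≤ (1 - (p - δ)) * h := by linarith
  exact Set.subset_empty_iff.1
    (hB ▸ Set.inter_subset_inter_left _ (Set.Ioo_subset_Ioo h3 h2))

lemma le_upperPorosity_iUnion {n : ℕ} {A : Fin n → Set ℝ} {p : ℝ} (hp1 : p ≤ 1)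
    (hEq : ∀ i, upperPorosity (A i) = p) {h : ℕ → ℝ} (hpos : ∀ k, 0 < h k)
    (hlim : Tendsto h atTop (nhds 0))
    (hgap : ∀ i, Tendsto (fun k => gapLength (A i) (h k) / h k) atTop (nhds p))
    {δ : ℝ} (hδ : 0 < δ) (hδp : δ < p) :
    (p - δ) / (p + δ) - (1 - (p - δ)) ≤ upperPorosity (⋃ i, A i) := by
  have hlim' : Tendsto h atTop (nhdsWithin 0 (Set.Ioi 0)) :=
    tendsto_nhdsWithin_iff.2 ⟨hlim, Eventually.of_forall hpos⟩
  have hup : ∀ᶠ x in nhdsWithin (0:ℝ) (Set.Ioi 0), ∀ i, gapLength (A i) x / x < p + δ :=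
    Filter.eventually_all.2 fun i => eventually_gapLength_div_lt (by rw [hEq i]; linarith)
  obtain ⟨η, hη, hη'⟩ := mem_nhdsGT_iff_exists_Ioo_subset.1 hup
  have hlow : ∀ᶠ k in atTop, ∀ i, p - δ < gapLength (A i) (h k) / h k :=
    Filter.eventually_all.2 fun i => (hgap i).eventually (lt_mem_nhds (by linarith))
  have hev : ∀ᶠ k in atTop, (p - δ) / (p + δ) - (1 - (p - δ))
      ≤ gapLength (⋃ i, A i) (h k) / h k := by
    filter_upwards [hlow, hlim.eventually (gt_mem_nhds hη)] with k hk hkη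
    have hempty : Set.Ioo ((1 - (p - δ)) * h k) ((p - δ) / (p + δ) * h k) ∩ (⋃ i, A i) = ∅ := by
      rw [Set.inter_iUnion, Set.iUnion_eq_empty]
      refine fun i => Ioo_inter_eq_empty_of_gapLength hδ hδp (hpos k)
        ((lt_div_iff₀ (hpos k)).1 (hk i)) fun x hx hxk => ?_
      exact (div_lt_iff₀ hx).1 (hη' ⟨hx, hxk.trans_lt hkη⟩ i)
    have hle : (p - δ) / (p + δ) * h k ≤ h k :=
      mul_le_of_le_one_left (hpos k).le ((div_le_one (by linarith)).2 (by linarith))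
    rw [le_div_iff₀ (hpos k), sub_mul]
    exact sub_le_gapLength (hpos k).le (mul_nonneg (by linarith) (hpos k).le) hle hempty
  exact Filter.le_limsup_of_frequently_le (hlim'.frequently hev.frequently)
    (isBoundedUnder_le_gapLength_div _)

theorem stmt5 (n : ℕ) (hn : 0 < n) (A : Fin n → Set ℝ)
    (hA : ∀ i, A i ⊆ Set.Ici 0) (p : ℝ) (hp : p ∈ Set.Icc (0:ℝ) 1)
    (hEq : ∀ i, upperPorosity (A i) = p) :
    (⋂ i, UMP (A i)).Nonempty ↔ upperPorosity (⋃ i, A i) = p := by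
  constructor
  · rintro ⟨h, hh⟩
    have hU : ∀ i, h ∈ UMP (A i) := Set.mem_iInter.1 hh
    refine le_antisymm (hEq ⟨0, hn⟩ ▸ upperPorosity_anti (Set.subset_iUnion A ⟨0, hn⟩)) ?_
    rcases hp.1.eq_or_lt with rfl | hp0
    · exact upperPorosity_nonneg _
    · have hgap : ∀ i, Tendsto (fun k => gapLength (A i) (h k) / h k) atTop (nhds p) :=
        fun i => hEq i ▸ (hU i).2.2
      -- let `δ → 0⁺` in the lower bound
      have hcont : Tendsto (fun δ : ℝ => (p - δ) / (p + δ) - (1 - (p - δ)))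
          (nhdsWithin 0 (Set.Ioi 0)) (nhds p) := by
        have hc : ContinuousAt (fun δ : ℝ => (p - δ) / (p + δ) - (1 - (p - δ))) 0 := by
          have : p + 0 ≠ 0 := by linarith
          fun_prop (disch := assumption)
        have h0 : (p - 0) / (p + 0) - (1 - (p - 0)) = p := by
          simp [hp0.ne']
        have ht := hc.tendsto
        simp only [h0] at ht
        exact ht.mono_left nhdsWithin_le_nhds
      refine le_of_tendsto hcont ?_
      filter_upwards [Ioo_mem_nhdsGT hp0] with δ hδ
      exact le_upperPorosity_iUnion hp.2 hEq (hU ⟨0, hn⟩).1 (hU ⟨0, hn⟩).2.1 hgap hδ.1 hδ.2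
  · intro hE
    have hex : ∀ k : ℕ, ∃ x : ℝ, x ∈ Set.Ioo (0:ℝ) (1 / ((k:ℝ) + 1)) ∧
        p - 1 / ((k:ℝ) + 1) < gapLength (⋃ i, A i) x / x := by
      intro k
      have hk : (0:ℝ) < 1 / ((k:ℝ) + 1) := by positivity
      have hfr : ∃ᶠ x in nhdsWithin (0:ℝ) (Set.Ioi 0),
          p - 1 / ((k:ℝ) + 1) < gapLength (⋃ i, A i) x / x :=
        Filter.frequently_lt_of_lt_limsup (isCoboundedUnder_le_gapLength_div _)
          (show _ < upperPorosity _ by rw [hE]; linarith)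
      obtain ⟨x, hx1, hx2⟩ := (hfr.and_eventually (Ioo_mem_nhdsGT hk)).exists
      exact ⟨x, hx2, hx1⟩
    choose h hmem hlow using hex
    have hpos : ∀ k, 0 < h k := fun k => (hmem k).1
    have hlim : Tendsto h atTop (nhds 0) :=
      squeeze_zero (fun k => (hpos k).le) (fun k => (hmem k).2.le)
        tendsto_one_div_add_atTop_nhds_zero_nat
    have hlim' : Tendsto h atTop (nhdsWithin 0 (Set.Ioi 0)) :=
      tendsto_nhdsWithin_iff.2 ⟨hlim, Eventually.of_forall hpos⟩
    refine ⟨h, Set.mem_iInter.2 fun i => ⟨hpos, hlim, ?_⟩⟩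
    rw [hEq i]
    have hsub : Tendsto (fun k : ℕ => p - 1 / ((k:ℝ) + 1)) atTop (nhds p) := by
      simpa using tendsto_one_div_add_atTop_nhds_zero_nat.const_sub p
    refine tendsto_order.2 ⟨fun q hq => ?_, fun q hq => ?_⟩
    · filter_upwards [hsub.eventually (lt_mem_nhds hq)] with k hk
      exact (hk.trans (hlow k)).trans_le (div_le_div_of_nonneg_right
        (gapLength_anti (Set.subset_iUnion A i) (hpos k).le) (hpos k).le)
    · exact hlim'.eventually (eventually_gapLength_div_lt (by rw [hEq i]; exact hq))
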